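/- arXiv:2402.15136 — 8 statements merged into one kernel-verified Lean document; each statement's English description precedes it below -/
import Mathlib

section
/- Let P be a property of schemes. Assume P is local in the following sense: for every scheme X, every n ≥ 1 and every family of open subschemes U₁, …, Uₙ of X with U₁ ∪ ⋯ ∪ Uₙ = X, if for every nonempty subset S ⊆ {1, …, n} the open subscheme ⋂_{i ∈ S} Uᵢ (regarded as a scheme) satisfies P, then X satisfies P. If every affine scheme satisfies P, then every scheme whose underlying topological space is quasi-compact and quasi-separated satisfies P. -/
open AlgebraicGeometry CategoryTheory

universe u

theorem local_property_aux (P : Scheme.{u} → Prop)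
    (hlocal : ∀ (X : Scheme.{u}) (n : ℕ), 1 ≤ n → ∀ U : Fin n → X.Opens,
      (⨆ i, U i) = ⊤ →
      (∀ S : Finset (Fin n), S.Nonempty → P (⨅ i ∈ S, U i : X.Opens).toScheme) → P X)
    (X : Scheme.{u}) (hqc : CompactSpace X) (Q : X.Opens → Prop)
    (hinf : ∀ U V, Q U → Q V → Q (U ⊓ V)) (haff : ∀ U, IsAffineOpen U → Q U)
    (hQ : ∀ U, Q U → P U.toScheme) : P X := by
  obtain ⟨s, hs, hsup⟩ := (isCompact_iff_finite_and_eq_biUnion_affineOpens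
    (U := (⊤ : X.Opens))).mp (by simpa using isCompact_univ)
  -- add the empty affine open so that the cover is nonempty
  let e : X.affineOpens := ⟨⊥, isAffineOpen_bot X⟩
  obtain ⟨n, f, hf⟩ := (hs.insert e).fin_param
  have hrange : Set.range f = insert e s := hf.2
  have hn : 1 ≤ n := by
    obtain ⟨i, -⟩ : e ∈ Set.range f := hrange ▸ Set.mem_insert _ _
    have := i.2
    omega
  refine hlocal X n hn (fun i => (f i).1) ?_ ?_
  · rw [eq_top_iff, hsup]
    refine iSup₂_le fun U hU => ?_
    obtain ⟨i, rfl⟩ : U ∈ Set.range f := hrange ▸ Set.mem_insert_of_mem _ hU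
    exact le_iSup (fun i => (f i).1) i
  · intro S hS
    apply hQ
    rw [← Finset.inf_eq_iInf, ← Finset.inf'_eq_inf hS]
    exact Finset.inf'_induction hS _ (fun U hU V hV => hinf U V hU hV)
      (fun i _ => haff _ (f i).2)

theorem local_property_of_separated (P : Scheme.{u} → Prop)
    (hlocal : ∀ (X : Scheme.{u}) (n : ℕ), 1 ≤ n → ∀ U : Fin n → X.Opens,
      (⨆ i, U i) = ⊤ →
      (∀ S : Finset (Fin n), S.Nonempty → P (⨅ i ∈ S, U i : X.Opens).toScheme) → P X)
    (haffine : ∀ X : Scheme.{u}, IsAffine X → P X)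
    (X : Scheme.{u}) (hqc : CompactSpace X) (hs : X.IsSeparated) : P X :=
  local_property_aux P hlocal X hqc IsAffineOpen (fun _ _ hU hV => hU.inf hV)
    (fun _ h => h) (fun _ h => haffine _ h)


/-- Let `P` be a property of schemes which is local in the sense that
for every scheme `X`, every `n ≥ 1` and every family of open subschemes `U₁, …, Uₙ` of `X`
covering `X`, if for every nonempty subset `S ⊆ {1, …, n}` the open subscheme
`⋂_{i ∈ S} Uᵢ` (regarded as a scheme) satisfies `P`, then `X` satisfies `P`.
If every affine scheme satisfies `P`, then every scheme whose underlying topological space is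
quasi-compact and quasi-separated satisfies `P`. -/
theorem local_property_of_affine_qcqs (P : Scheme.{u} → Prop)
    (hlocal : ∀ (X : Scheme.{u}) (n : ℕ), 1 ≤ n → ∀ U : Fin n → X.Opens,
      (⨆ i, U i) = ⊤ →
      (∀ S : Finset (Fin n), S.Nonempty → P (⨅ i ∈ S, U i : X.Opens).toScheme) → P X)
    (haffine : ∀ X : Scheme.{u}, IsAffine X → P X)
    (X : Scheme.{u}) (hqc : CompactSpace X) (hqs : QuasiSeparatedSpace X) :
    P X := by
  refine local_property_aux P hlocal X hqc
    (fun U => IsCompact (U : Set X) ∧ U.toScheme.IsSeparated) ?_ ?_ ?_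
  · rintro U V ⟨hU, hU'⟩ ⟨hV, _⟩
    refine ⟨QuasiSeparatedSpace.inter_isCompact _ _ U.2 hU V.2 hV, ?_⟩
    constructor
    rw [← Limits.terminal.comp_from (X.homOfLE (inf_le_left : U ⊓ V ≤ U))]
    infer_instance
  · intro U hU
    have : IsAffine U.toScheme := hU
    exact ⟨hU.isCompact, inferInstance⟩
  · rintro U ⟨hU, hU'⟩
    exact local_property_of_separated P hlocal haffine _ (isCompact_iff_compactSpace.mp hU) hU'
end

section
/- Let X be a qcqs scheme and let E be a sieve on X in the category of schemes. The following are equivalent: (1) E is a covering sieve for the Zariski topology, i.e. the Grothendieck topology on the category of schemes generated by jointly surjective families of open immersions; (2) E contains a finite collection of open immersions {Uᵢ ⟶ X}_{i=1,…,n} such that the induced morphism ⨿ᵢ Uᵢ ⟶ X from the disjoint union is a Zariski epi; (3) E contains a finite collection of morphisms {Zᵢ ⟶ X}_{i=1,…,n} from qcqs schemes such that the induced morphism ⨿ᵢ Zᵢ ⟶ X from the disjoint union is a Zariski epi. -/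
open AlgebraicGeometry CategoryTheory CategoryTheory.Limits

universe u

/-- A morphism `p : V ⟶ X` of schemes is a *Zariski epi* if `p` is étale and there exist
finitely many open subschemes `U₁, …, Uₙ` of `X` with `U₁ ∪ ⋯ ∪ Uₙ = X` such that for each
`i` the open immersion `Uᵢ ⟶ X` factors through `p`. -/
def IsZariskiEpi {V X : Scheme.{u}} (p : V ⟶ X) : Prop :=
  IsEtale p ∧
    ∃ (n : ℕ) (U : Fin n → X.Opens), (⨆ i, U i) = ⊤ ∧
      ∀ i, ∃ s : (U i).toScheme ⟶ V, s ≫ p = (U i).ι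

/-- Covering sieves for the Zariski topology are checked locally. -/
lemma zariski_mem_of_local {X : Scheme.{u}} (E : Sieve X)
    (h : ∀ x : X, ∃ (Y : Scheme.{u}) (f : Y ⟶ X), IsOpenImmersion f ∧ E.arrows f ∧
      x ∈ Set.range f) : E ∈ Scheme.zariskiTopology X := by
  choose Y f hf hE hx using h
  rw [Scheme.zariskiTopology, Scheme.grothendieckTopology]
  refine Precoverage.generate_mem_toGrothendieck (R := Presieve.ofArrows Y f) ?_ |> fun H =>
    GrothendieckTopology.superset_covering _ ?_ H
  · rw [Sieve.generate_le_iff, Presieve.ofArrows_le_iff]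
    exact hE
  · rw [Scheme.ofArrows_mem_precoverage_iff]
    exact ⟨fun x => ⟨x, hx x⟩, hf⟩

lemma zariski_mem_of_epi {X : Scheme.{u}} (E : Sieve X) (n : ℕ) (Z : Fin n → Scheme.{u})
    (g : ∀ i, Z i ⟶ X) (hg : ∀ i, E.arrows (g i)) (h : IsZariskiEpi (Sigma.desc g)) :
    E ∈ Scheme.zariskiTopology X := by
  obtain ⟨-, m, U, hU, hs⟩ := h
  refine zariski_mem_of_local E fun x => ?_
  obtain ⟨j, hj⟩ := TopologicalSpace.Opens.mem_iSup.mp (hU.ge (show x ∈ (⊤ : X.Opens) from trivial))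
  obtain ⟨s, hs⟩ := hs j
  obtain ⟨i, z, hz⟩ : ∃ (i : Fin n) (z : Z i), Sigma.ι Z i z = s ⟨x, hj⟩ :=
    (sigmaOpenCover Z).exists_eq (s ⟨x, hj⟩)
  let W := s ⁻¹ᵁ (Sigma.ι Z i).opensRange
  refine ⟨W, W.ι ≫ (U j).ι, inferInstance, ?_, ?_⟩
  · let t : (W : Scheme.{u}) ⟶ Z i := IsOpenImmersion.lift (Sigma.ι Z i) (W.ι ≫ s) (by
      rintro _ ⟨y, rfl⟩
      exact y.2)
    have ht : t ≫ Sigma.ι Z i = W.ι ≫ s := IsOpenImmersion.lift_fac _ _ _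
    have : W.ι ≫ (U j).ι = t ≫ g i := by
      rw [← hs, ← Category.assoc, ← ht, Category.assoc, Sigma.ι_desc]
    rw [this]
    exact E.downward_closed (hg i) t
  · exact ⟨⟨⟨x, hj⟩, ⟨z, hz⟩⟩, rfl⟩

lemma zariski_exists_affine {X : Scheme.{u}} [CompactSpace X] (E : Sieve X)
    (hE : E ∈ Scheme.zariskiTopology X) :
    ∃ (n : ℕ) (U : Fin n → X.Opens), (∀ i, IsAffineOpen (U i)) ∧ (∀ i, E.arrows (U i).ι) ∧
      IsZariskiEpi (Sigma.desc fun i => (U i).ι) := by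
  have key : ∀ x : X, ∃ V : X.Opens, IsAffineOpen V ∧ x ∈ V ∧ E.arrows V.ι := by
    intro x
    rw [Scheme.zariskiTopology, Scheme.mem_grothendieckTopology_iff] at hE
    obtain ⟨𝒰, hle⟩ := hE
    obtain ⟨i, y, rfl⟩ := 𝒰.exists_eq x
    have : IsOpenImmersion (𝒰.f i) := 𝒰.map_prop i
    obtain ⟨V, hV, hyV, hVs⟩ := exists_isAffineOpen_mem_and_subset
      (U := (𝒰.f i).opensRange) (x := 𝒰.f i y) ⟨y, rfl⟩
    refine ⟨V, hV, hyV, ?_⟩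
    have := E.downward_closed (hle _ _ ⟨i⟩) (IsOpenImmersion.lift (𝒰.f i) V.ι (by
      rw [Scheme.Opens.range_ι]; exact hVs))
    rwa [IsOpenImmersion.lift_fac] at this
  choose V hV hxV hEV using key
  obtain ⟨t, ht⟩ := isCompact_univ.elim_finite_subcover (fun x => (V x : Set X))
    (fun x => (V x).2) (fun x _ => Set.mem_iUnion.mpr ⟨x, hxV x⟩)
  refine ⟨t.card, fun i => V (t.equivFin.symm i), fun i => hV _, fun i => hEV _,
    ?_, t.card, fun i => V (t.equivFin.symm i), ?_, fun i => ⟨Sigma.ι (fun i => (V (t.equivFin.symm i)).toScheme) i, Sigma.ι_desc _ _⟩⟩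
  · have : IsZariskiLocalAtSource @Etale.{u} :=
      HasRingHomProperty.instIsZariskiLocalAtSource (Q := RingHom.Etale)
    have : Etale (Sigma.desc fun i => (V (t.equivFin.symm i)).ι) :=
      IsZariskiLocalAtSource.sigmaDesc (P := @Etale.{u}) (fun _ => inferInstance)
    exact this
  · rw [eq_top_iff]
    intro x _
    obtain ⟨y, hy, hxy⟩ := Set.mem_iUnion₂.mp (ht (Set.mem_univ x))
    exact TopologicalSpace.Opens.mem_iSup.mpr ⟨t.equivFin ⟨y, hy⟩, by simpa using hxy⟩

/-- For a sieve `E` on a qcqs scheme `X` the following are equivalent: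
(1) `E` is a covering sieve for the Zariski topology (the Grothendieck topology generated by
jointly surjective families of open immersions); (2) `E` contains a finite collection of open
immersions `{Uᵢ ⟶ X}` such that the induced morphism `⨿ᵢ Uᵢ ⟶ X` is a Zariski epi;
(3) `E` contains a finite collection of morphisms `{Zᵢ ⟶ X}` from qcqs schemes such that the
induced morphism `⨿ᵢ Zᵢ ⟶ X` is a Zariski epi. -/
theorem zariskiTopology_mem_tfae (X : Scheme.{u}) [CompactSpace X] [QuasiSeparatedSpace X]
    (E : Sieve X) :
    List.TFAE
      [E ∈ Scheme.zariskiTopology X,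
        ∃ (n : ℕ) (Z : Fin n → Scheme.{u}) (g : ∀ i, Z i ⟶ X),
          (∀ i, IsOpenImmersion (g i)) ∧ (∀ i, E.arrows (g i)) ∧
            IsZariskiEpi (Sigma.desc g),
        ∃ (n : ℕ) (Z : Fin n → Scheme.{u}) (g : ∀ i, Z i ⟶ X),
          (∀ i, CompactSpace (Z i) ∧ QuasiSeparatedSpace (Z i)) ∧ (∀ i, E.arrows (g i)) ∧
            IsZariskiEpi (Sigma.desc g)] := by
  tfae_have 1 → 2 := fun h => by
    obtain ⟨n, U, -, hE, hZ⟩ := zariski_exists_affine E h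
    exact ⟨n, fun i => (U i).toScheme, fun i => (U i).ι, fun i => inferInstance, hE, hZ⟩
  tfae_have 1 → 3 := fun h => by
    obtain ⟨n, U, hU, hE, hZ⟩ := zariski_exists_affine E h
    refine ⟨n, fun i => (U i).toScheme, fun i => (U i).ι, fun i => ?_, hE, hZ⟩
    have : IsAffine (U i).toScheme := hU i
    exact ⟨inferInstance, inferInstance⟩
  tfae_have 2 → 1 := fun ⟨n, Z, g, _, hE, hZ⟩ => zariski_mem_of_epi E n Z g hE hZ
  tfae_have 3 → 1 := fun ⟨n, Z, g, _, hE, hZ⟩ => zariski_mem_of_epi E n Z g hE hZ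
  tfae_finish
end

section
/- Let X be a qcqs scheme and let V₁, …, Vₘ ⟶ X be finitely many étale morphisms such that the induced morphism V₁ ⨿ ⋯ ⨿ Vₘ ⟶ X from the disjoint union is a Nisnevich epi. Then the family {Vⱼ ⟶ X}_{j=1,…,m} is a Nisnevich covering: there exists a finite chain of open subschemes ∅ = U₀ ⊆ U₁ ⊆ ⋯ ⊆ Uₙ = X such that for each i = 1, …, n there is a single index j(i) with the property that every morphism g : T ⟶ X from a reduced scheme T whose set-theoretic image is contained in Uᵢ \ Uᵢ₋₁ factors through V_{j(i)} ⟶ X. -/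
open AlgebraicGeometry CategoryTheory CategoryTheory.Limits

universe u

/-- A morphism `p : V ⟶ X` of schemes is a *Nisnevich epi* if `p` is étale and there exists a
finite chain of open subschemes `∅ = U₀ ⊆ U₁ ⊆ ⋯ ⊆ Uₙ = X` such that for every `i = 1, …, n`,
every morphism `g : T ⟶ X` from a reduced scheme `T` whose set-theoretic image is contained in
`Uᵢ \ Uᵢ₋₁` factors through `p`. -/
def IsNisnevichEpi {V X : Scheme.{u}} (p : V ⟶ X) : Prop :=
  IsEtale p ∧
    ∃ (n : ℕ) (U : Fin (n + 1) → X.Opens), Monotone U ∧ U 0 = ⊥ ∧ U (Fin.last n) = ⊤ ∧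
      ∀ i : Fin n, ∀ (T : Scheme.{u}) [IsReduced T] (g : T ⟶ X),
        Set.range g.base ⊆ (U i.succ : Set X) \ (U i.castSucc : Set X) →
        ∃ h : T ⟶ V, h ≫ p = g

theorem exists_reduced_locallyClosed {X : Scheme.{u}} (A B : X.Opens) :
    ∃ (Z : Scheme.{u}) (_ : IsReduced Z) (i : Z ⟶ X), Topology.IsEmbedding i ∧
      Set.range i = (B : Set X) \ (A : Set X) ∧
      ∀ (T : Scheme.{u}) [IsReduced T] (g : T ⟶ X),
        Set.range g ⊆ (B : Set X) \ (A : Set X) → ∃ h : T ⟶ Z, h ≫ i = g := by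
  let C : TopologicalSpace.Closeds B := (B.ι ⁻¹ᵁ A).compl
  have hC (x : B) : x ∈ C ↔ B.ι x ∉ A := Iff.rfl
  let I := Scheme.IdealSheafData.vanishingIdeal C
  have hred : IsReduced I.subscheme := by
    have : ∀ j, IsReduced (I.subschemeCover.openCover.X j) := by
      intro j
      have : _root_.IsReduced (Γ(B, j.1) ⧸ I.ideal j) := by
        rw [← Ideal.isRadical_iff_quotient_reduced]
        exact PrimeSpectrum.isRadical_vanishingIdeal _
      change IsReduced (Spec (.of (Γ(B, j.1) ⧸ I.ideal j)))
      infer_instance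
    exact IsReduced.of_openCover _ I.subschemeCover.openCover
  refine ⟨I.subscheme, hred, I.subschemeι ≫ B.ι, ?_, ?_, ?_⟩
  · exact (I.subschemeι ≫ B.ι).isEmbedding
  · ext x
    constructor
    · rintro ⟨z, rfl⟩
      have hz : I.subschemeι z ∈ C := by
        have : I.subschemeι z ∈ Set.range I.subschemeι := ⟨z, rfl⟩
        rw [I.range_subschemeι, Scheme.IdealSheafData.coe_support_vanishingIdeal] at this
        exact this
      rw [Scheme.Hom.comp_apply]
      exact ⟨(I.subschemeι z).2, (hC _).1 hz⟩
    · rintro ⟨hB, hA⟩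
      have : (⟨x, hB⟩ : B) ∈ Set.range I.subschemeι := by
        rw [I.range_subschemeι, Scheme.IdealSheafData.coe_support_vanishingIdeal]
        exact hA
      obtain ⟨z, hz⟩ := this
      refine ⟨z, ?_⟩
      rw [Scheme.Hom.comp_apply, hz]
      rfl
  · intro T _ g hg
    let gB : T ⟶ B := IsOpenImmersion.lift B.ι g (by
      rw [Scheme.Opens.range_ι]; exact fun x hx ↦ (hg hx).1)
    have hgB : gB ≫ B.ι = g := IsOpenImmersion.lift_fac _ _ _
    have hker : I.subschemeι.ker ≤ gB.ker := by
      rw [I.ker_subschemeι, ← Scheme.IdealSheafData.map_bot, ← T.nilradical_eq_bot,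
        ← Scheme.IdealSheafData.vanishingIdeal_top, Scheme.IdealSheafData.map_vanishingIdeal]
      apply Scheme.IdealSheafData.vanishingIdeal_antimono
      rw [TopologicalSpace.Closeds.closure_le]
      rintro _ ⟨t, -, rfl⟩
      change gB t ∈ C
      refine (hC _).2 ?_
      rw [← Scheme.Hom.comp_apply, hgB]
      exact (hg ⟨t, rfl⟩).2
    refine ⟨IsClosedImmersion.lift I.subschemeι gB hker, ?_⟩
    rw [← Category.assoc, IsClosedImmersion.lift_fac, hgB]

/-- One step of a Nisnevich covering. -/
def NisStep {X : Scheme.{u}} {m : ℕ} {V : Fin m → Scheme.{u}} (p : ∀ j, V j ⟶ X)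
    (A B : X.Opens) : Prop :=
  A ≤ B ∧ ∃ j : Fin m, ∀ (T : Scheme.{u}) [IsReduced T] (g : T ⟶ X),
    Set.range g.base ⊆ (B : Set X) \ (A : Set X) → ∃ h : T ⟶ V j, h ≫ p j = g

theorem nisStep_refine {X : Scheme.{u}} {m : ℕ} {V : Fin m → Scheme.{u}} (p : ∀ j, V j ⟶ X)
    (A B : X.Opens) (hAB : A ≤ B)
    (H : ∀ (T : Scheme.{u}) [IsReduced T] (g : T ⟶ X),
        Set.range g.base ⊆ (B : Set X) \ (A : Set X) → ∃ h : T ⟶ ∐ V, h ≫ Sigma.desc p = g) :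
    Relation.ReflTransGen (NisStep p) A B := by
  obtain ⟨Z, hZ, i, hi, hri, hl⟩ := exists_reduced_locallyClosed A B
  obtain ⟨s, hs⟩ := H Z i hri.le
  have hO : ∀ j : Fin m, ∃ O : X.Opens, ∀ z : Z, i z ∈ O ↔ s z ∈ (Sigma.ι V j).opensRange := by
    intro j
    obtain ⟨O, hO, hOpre⟩ := hi.isOpen_iff.1 (s ⁻¹ᵁ (Sigma.ι V j).opensRange).2
    exact ⟨⟨O, hO⟩, fun z ↦ Set.ext_iff.1 hOpre z⟩
  choose O hO using hO
  let W : ℕ → X.Opens := fun k ↦ A ⊔ (B ⊓ ⨆ j : {j : Fin m // (j : ℕ) < k}, O j)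
  have hW (k : ℕ) (x : X) : x ∈ W k ↔ x ∈ A ∨ (x ∈ B ∧ ∃ j : Fin m, (j : ℕ) < k ∧ x ∈ O j) := by
    change x ∈ (A ⊔ (B ⊓ ⨆ j : {j : Fin m // (j : ℕ) < k}, O j)) ↔ _
    rw [← SetLike.mem_coe]
    simp
  have hW0 : W 0 = A := by
    ext x
    simp only [SetLike.mem_coe, hW]
    simp
  have hWm : W m = B := by
    ext x
    simp only [SetLike.mem_coe, hW]
    constructor
    · rintro (h | h)
      · exact hAB h
      · exact h.1
    · intro hB
      by_cases hA : x ∈ A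
      · exact Or.inl hA
      · have : x ∈ Set.range i := by rw [hri]; exact ⟨hB, hA⟩
        obtain ⟨z, rfl⟩ := this
        obtain ⟨j, y, hy⟩ := (sigmaOpenCover V).exists_eq (s z)
        exact Or.inr ⟨hB, j, j.2, (hO j z).2 ⟨y, hy⟩⟩
  have key : ∀ k, k ≤ m → Relation.ReflTransGen (NisStep p) (W 0) (W k) := by
    intro k
    induction k with
    | zero => intro _; exact .refl
    | succ k ih =>
      intro hk
      refine (ih (by omega)).tail ⟨?_, ⟨k, hk⟩, ?_⟩
      · intro x hx
        have hx := (hW _ _).1 hx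
        refine (hW _ _).2 ?_
        rcases hx with h | ⟨h, j, hj, hx⟩
        · exact Or.inl h
        · exact Or.inr ⟨h, j, by omega, hx⟩
      · intro T _ g hg
        have hmem : ∀ t, g t ∈ B ∧ g t ∉ A ∧ g t ∈ O ⟨k, hk⟩ := by
          intro t
          obtain ⟨h1, h2⟩ := hg ⟨t, rfl⟩
          have h1 := (hW _ _).1 h1
          have h2 := fun h ↦ h2 ((hW _ _).2 h)
          have hA : g t ∉ A := fun h ↦ h2 (Or.inl h)
          rcases h1 with h | ⟨hB, j, hj, hx⟩
          · exact absurd h hA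
          · have : j = ⟨k, hk⟩ := by
              by_contra hne
              have : (j : ℕ) ≠ k := fun h ↦ hne (Fin.ext h)
              exact h2 (Or.inr ⟨hB, j, by omega, hx⟩)
            exact ⟨hB, hA, this ▸ hx⟩
        obtain ⟨h, hh⟩ := hl T g (by
          rintro _ ⟨t, rfl⟩
          exact ⟨(hmem t).1, (hmem t).2.1⟩)
        have hr : Set.range (h ≫ s) ⊆ Set.range (Sigma.ι V ⟨k, hk⟩) := by
          rintro _ ⟨t, rfl⟩
          rw [Scheme.Hom.comp_apply]
          refine (hO ⟨k, hk⟩ (h t)).1 ?_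
          rw [← Scheme.Hom.comp_apply, hh]
          exact (hmem t).2.2
        refine ⟨IsOpenImmersion.lift (Sigma.ι V ⟨k, hk⟩) (h ≫ s) hr, ?_⟩
        have e := IsOpenImmersion.lift_fac (Sigma.ι V ⟨k, hk⟩) (h ≫ s) hr
        have eq2 := congrArg (fun q ↦ q ≫ Sigma.desc p) e
        simp only [Category.assoc, Sigma.ι_desc, hs, hh] at eq2
        exact eq2
  have := key m le_rfl
  rwa [hW0, hWm] at this

theorem exists_fin_chain {α : Type*} {r : α → α → Prop} {a b : α}
    (h : Relation.ReflTransGen r a b) :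
    ∃ (n : ℕ) (U : Fin (n + 1) → α), U 0 = a ∧ U (Fin.last n) = b ∧
      ∀ i : Fin n, r (U i.castSucc) (U i.succ) := by
  induction h with
  | refl => exact ⟨0, fun _ ↦ a, rfl, rfl, fun i ↦ i.elim0⟩
  | @tail b c _ hbc ih =>
    obtain ⟨n, U, h0, hn, hU⟩ := ih
    refine ⟨n + 1, Fin.snoc U c, ?_, ?_, ?_⟩
    · rw [← Fin.castSucc_zero, Fin.snoc_castSucc, h0]
    · rw [Fin.snoc_last]
    · intro i
      rw [Fin.snoc_castSucc]
      induction i using Fin.lastCases with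
      | last => rw [Fin.succ_last, Fin.snoc_last, hn]; exact hbc
      | cast i => rw [Fin.succ_castSucc, Fin.snoc_castSucc]; exact hU i

/-- Let `X` be a qcqs scheme and `V₁, …, Vₘ ⟶ X` finitely many étale
morphisms such that the induced morphism `V₁ ⨿ ⋯ ⨿ Vₘ ⟶ X` is a Nisnevich epi. Then the
family `{Vⱼ ⟶ X}` is a Nisnevich covering: there is a finite chain of opens
`∅ = U₀ ⊆ ⋯ ⊆ Uₙ = X` such that for each `i` there is a single index `j(i)` such that every
morphism from a reduced scheme to `X` with set-theoretic image in `Uᵢ \ Uᵢ₋₁` factors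
through `V_{j(i)} ⟶ X`. -/
theorem nisnevich_covering_of_isNisnevichEpi_sigmaDesc
    (X : Scheme.{u}) [CompactSpace X] [QuasiSeparatedSpace X]
    (m : ℕ) (V : Fin m → Scheme.{u}) (p : ∀ j, V j ⟶ X) (hp : ∀ j, IsEtale (p j))
    (hdesc : IsNisnevichEpi (Sigma.desc p)) :
    ∃ (n : ℕ) (U : Fin (n + 1) → X.Opens), Monotone U ∧ U 0 = ⊥ ∧ U (Fin.last n) = ⊤ ∧
      ∀ i : Fin n, ∃ j : Fin m,
        ∀ (T : Scheme.{u}) [IsReduced T] (g : T ⟶ X),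
          Set.range g.base ⊆ (U i.succ : Set X) \ (U i.castSucc : Set X) →
          ∃ h : T ⟶ V j, h ≫ p j = g := by
  obtain ⟨-, n, U, hmono, h0, hn, hU⟩ := hdesc
  have key : ∀ i : Fin (n + 1), Relation.ReflTransGen (NisStep p) (U 0) (U i) := by
    intro i
    induction i using Fin.induction with
    | zero => exact .refl
    | succ i ih => exact ih.trans (nisStep_refine p _ _ (hmono i.castSucc_lt_succ.le) (hU i))
  obtain ⟨N, W, hW0, hWN, hW⟩ := exists_fin_chain (key (Fin.last n))
  exact ⟨N, W, Fin.monotone_iff_le_succ.2 fun i ↦ (hW i).1, hW0.trans h0, hWN.trans hn,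
    fun i ↦ (hW i).2⟩
end

section
/- Let f : A ⟶ B be a flat homomorphism of commutative rings and let S ⊆ A be a set of elements such that for every s ∈ S the induced map A/sA ⟶ B/f(s)B is an isomorphism. Let A[S⁻¹] denote the localization of A at the multiplicative submonoid generated by S, let B[f(S)⁻¹] denote the localization of B at the multiplicative submonoid generated by f(S), and let φ : A[S⁻¹] ⟶ B[f(S)⁻¹] be the induced map. Then the sequence 0 ⟶ A ⟶ B ⊕ A[S⁻¹] ⟶ B[f(S)⁻¹] ⟶ 0 is a short exact sequence of A-modules, where the first map is a ↦ (f(a), a/1) and the second map is (b, x) ↦ b/1 − φ(x); that is, the first map is injective, its image equals the kernel of the second map, and the second map is surjective. -/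
/-- The induced ring homomorphism `A[S⁻¹] ⟶ B[f(S)⁻¹]` between the localizations of `A` at the
multiplicative submonoid generated by `S` and of `B` at the multiplicative submonoid generated
by `f(S)`. -/
noncomputable def locSetMap {A B : Type*} [CommRing A] [CommRing B] (f : A →+* B) (S : Set A) :
    Localization (Submonoid.closure S) →+* Localization (Submonoid.closure (f '' S)) :=
  IsLocalization.map _ f
    (show Submonoid.closure S ≤ (Submonoid.closure (f '' S)).comap f from
      Submonoid.closure_le.mpr fun _ hs =>
        Submonoid.mem_comap.mpr (Submonoid.subset_closure (Set.mem_image_of_mem f hs)))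


theorem flat_ann_aux {A B : Type*} [CommRing A] [CommRing B] [Algebra A B] [Module.Flat A B]
    (m : A) (u : B) (h : m • u = 0) :
    ∃ (k : ℕ) (a : Fin k → A) (y : Fin k → B), u = ∑ j, a j • y j ∧ ∀ j, m * a j = 0 := by
  have := Module.Flat.isTrivialRelation_of_sum_smul_eq_zero (R := A) (M := B) (ι := Fin 1)
    (f := fun _ => m) (x := fun _ => u) (by simpa using h)
  obtain ⟨k, a, y, h1, h2⟩ := this
  exact ⟨k, fun j => a 0 j, y, h1 0, fun j => by simpa using h2 j⟩

/-- The map `A/t → B/tB` is surjective and injective, in elementary terms. -/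
structure QIso (A B : Type*) [CommRing A] [CommRing B] [Algebra A B] (t : A) : Prop where
  inj : ∀ (a : A) (b : B), algebraMap A B a = t • b → ∃ a', a = t * a'
  surj : ∀ b : B, ∃ (a : A) (b' : B), b = algebraMap A B a + t • b'

theorem sum_aux {A B : Type*} [CommRing A] [CommRing B] [Algebra A B]
    (t : A) (ht : QIso A B t) {k : ℕ} (a : Fin k → A) (y : Fin k → B) :
    ∃ (c : Fin k → A) (z : Fin k → B),
      ∑ j, a j • y j = algebraMap A B (∑ j, a j * c j) + t • ∑ j, a j • z j := by
  choose c z h using fun j => ht.surj (y j)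
  refine ⟨c, z, ?_⟩
  rw [map_sum, Finset.smul_sum, ← Finset.sum_add_distrib]
  refine Finset.sum_congr rfl fun j _ => ?_
  conv_lhs => rw [h j]
  simp only [Algebra.smul_def, map_mul]
  ring

theorem QIso.mul {A B : Type*} [CommRing A] [CommRing B] [Algebra A B] [Module.Flat A B]
    {t s : A} (ht : QIso A B t) (hs : QIso A B s) : QIso A B (t * s) where
  inj a b h := by
    obtain ⟨a', rfl⟩ := ht.inj a (s • b) (by rw [h, mul_smul])
    obtain ⟨k, c, y, h1, h2⟩ := flat_ann_aux t (algebraMap A B a' - s • b) (by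
      simp only [Algebra.smul_def, map_mul] at h ⊢
      linear_combination h)
    obtain ⟨d, z, hd⟩ := sum_aux s hs c y
    obtain ⟨a'', h3⟩ := hs.inj (a' - ∑ j, c j * d j) (b + ∑ j, c j • z j) (by
      rw [map_sub, smul_add]
      linear_combination h1 + hd)
    refine ⟨a'', ?_⟩
    have h4 : t * ∑ j, c j * d j = 0 := by
      rw [Finset.mul_sum]
      exact Finset.sum_eq_zero fun j _ => by rw [← mul_assoc, h2, zero_mul]
    linear_combination t * h3 + h4
  surj b := by
    obtain ⟨a, b', rfl⟩ := ht.surj b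
    obtain ⟨a', b'', rfl⟩ := hs.surj b'
    refine ⟨a + t * a', b'', ?_⟩
    simp only [Algebra.smul_def, map_mul, map_add]
    ring

/-- surjectivity on torsion -/
theorem QIso.tors {A B : Type*} [CommRing A] [CommRing B] [Algebra A B] [Module.Flat A B]
    {t : A} (ht : QIso A B t) (u : B) (hu : t • u = 0) :
    ∃ c, u = algebraMap A B c ∧ t * c = 0 := by
  obtain ⟨k, c, y, h1, h2⟩ := flat_ann_aux t u hu
  obtain ⟨d, z, hd⟩ := sum_aux t ht c y
  refine ⟨∑ j, c j * d j, ?_, ?_⟩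
  · have h5 : t • ∑ j, c j • z j = 0 := by
      rw [Finset.smul_sum]
      exact Finset.sum_eq_zero fun j _ => by rw [← mul_smul, h2, zero_smul]
    rw [h1, hd, h5, add_zero]
  · rw [Finset.mul_sum]
    exact Finset.sum_eq_zero fun j _ => by rw [← mul_assoc, h2, zero_mul]

/-- injectivity on torsion -/
theorem QIso.tors_inj {A B : Type*} [CommRing A] [CommRing B] [Algebra A B] [Module.Flat A B]
    {t : A} (ht : QIso A B t) (a : A) (ha : t * a = 0) (h : algebraMap A B a = 0) : a = 0 := by
  obtain ⟨k, c, y, h1, h2⟩ := flat_ann_aux a (1 : B) (by rw [Algebra.smul_def, h, zero_mul])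
  obtain ⟨d, z, hd⟩ := sum_aux t ht c y
  obtain ⟨e, h3⟩ := ht.inj (1 - ∑ j, c j * d j) (∑ j, c j • z j) (by
    rw [map_sub, map_one]
    linear_combination h1 + hd)
  have h4 : a * ∑ j, c j * d j = 0 := by
    rw [Finset.mul_sum]
    exact Finset.sum_eq_zero fun j _ => by rw [← mul_assoc, h2, zero_mul]
  linear_combination a * h3 + h4 + e * ha

/-- Let `f : A ⟶ B` be a flat homomorphism of commutative rings (here encoded
by an algebra structure, `f = algebraMap A B`) and `S ⊆ A` a set of elements such that for
every `s ∈ S` the induced map `A/sA ⟶ B/f(s)B` is an isomorphism.  Then the sequence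
`0 ⟶ A ⟶ B ⊕ A[S⁻¹] ⟶ B[f(S)⁻¹] ⟶ 0`, with first map `a ↦ (f(a), a/1)` and second map
`(b, x) ↦ b/1 − φ(x)`, is a short exact sequence: the first map is injective, its image is the
kernel of the second map, and the second map is surjective. -/
theorem shortExact_of_flat_quotient_iso
    {A B : Type*} [CommRing A] [CommRing B] [Algebra A B] [Module.Flat A B]
    (S : Set A)
    (hiso : ∀ s ∈ S, Function.Bijective
      (Ideal.quotientMap (Ideal.span {algebraMap A B s}) (algebraMap A B)
        (by rw [Ideal.span_le, Set.singleton_subset_iff]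
            exact Ideal.mem_comap.mpr (Ideal.subset_span (Set.mem_singleton _))))) :
    Function.Injective (fun a : A =>
        ((algebraMap A B a, algebraMap A (Localization (Submonoid.closure S)) a) :
          B × Localization (Submonoid.closure S))) ∧
    (∀ p : B × Localization (Submonoid.closure S),
        algebraMap B (Localization (Submonoid.closure (algebraMap A B '' S))) p.1 -
            locSetMap (algebraMap A B) S p.2 = 0 ↔
          p ∈ Set.range (fun a : A =>
            ((algebraMap A B a, algebraMap A (Localization (Submonoid.closure S)) a) :
              B × Localization (Submonoid.closure S)))) ∧
    Function.Surjective (fun p : B × Localization (Submonoid.closure S) =>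
        algebraMap B (Localization (Submonoid.closure (algebraMap A B '' S))) p.1 -
          locSetMap (algebraMap A B) S p.2) := by
  have key : ∀ t ∈ Submonoid.closure S, QIso A B t := by
    intro t ht
    induction ht using Submonoid.closure_induction with
    | mem s hs =>
      obtain ⟨hi, hsu⟩ := hiso s hs
      constructor
      · intro a b hab
        have h0 : Ideal.Quotient.mk (Ideal.span {s}) a = 0 := by
          apply hi
          rw [map_zero, Ideal.quotientMap_mk, Ideal.Quotient.eq_zero_iff_mem,
            Ideal.mem_span_singleton, hab, Algebra.smul_def]
          exact dvd_mul_right _ _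
        rwa [Ideal.Quotient.eq_zero_iff_mem, Ideal.mem_span_singleton] at h0
      · intro b
        obtain ⟨q, hq⟩ := hsu (Ideal.Quotient.mk _ b)
        obtain ⟨a, rfl⟩ := Ideal.Quotient.mk_surjective q
        rw [Ideal.quotientMap_mk, eq_comm, Ideal.Quotient.eq, Ideal.mem_span_singleton] at hq
        obtain ⟨b', hb⟩ := hq
        exact ⟨a, b', by rw [Algebra.smul_def]; linear_combination hb⟩
    | one => exact ⟨fun a _ _ => ⟨a, (one_mul a).symm⟩, fun b => ⟨0, b, by simp⟩⟩
    | mul x y _ _ hx hy => exact hx.mul hy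
  have himg : Submonoid.closure (algebraMap A B '' S) =
      (Submonoid.closure S).map (algebraMap A B) := (MonoidHom.map_mclosure _ _).symm
  have hmem : ∀ t ∈ Submonoid.closure S,
      algebraMap A B t ∈ Submonoid.closure (algebraMap A B '' S) := fun t ht => by
    rw [himg]; exact ⟨t, ht, rfl⟩
  have hmk : ∀ (a : A) (t : Submonoid.closure S),
      locSetMap (algebraMap A B) S (IsLocalization.mk' _ a t) =
        IsLocalization.mk' _ (algebraMap A B a) ⟨algebraMap A B t, hmem t t.2⟩ := fun a t =>
    IsLocalization.map_mk' _ a t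
  have halg : ∀ a : A, locSetMap (algebraMap A B) S (algebraMap A _ a) =
      algebraMap B _ (algebraMap A B a) := fun a => IsLocalization.map_eq _ a
  refine ⟨?_, ?_, ?_⟩
  · intro a a' h
    obtain ⟨h1, h2⟩ := Prod.mk.inj h
    obtain ⟨m, hm⟩ := (IsLocalization.eq_iff_exists (Submonoid.closure S) _).1 h2
    exact sub_eq_zero.1 ((key m m.2).tors_inj (a - a') (by linear_combination hm)
      (by rw [map_sub, h1, sub_self]))
  · rintro ⟨b, x⟩
    constructor
    · intro h
      obtain ⟨x, t, rfl⟩ := IsLocalization.exists_mk'_eq (Submonoid.closure S) x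
      simp only [hmk] at h
      rw [sub_eq_zero, eq_comm, IsLocalization.mk'_eq_iff_eq_mul, ← map_mul,
        IsLocalization.eq_iff_exists (Submonoid.closure (algebraMap A B '' S))] at h
      obtain ⟨⟨m', hm'⟩, h⟩ := h
      have hm2 := hm'
      rw [himg] at hm2
      obtain ⟨m, hm, rfl⟩ := hm2
      obtain ⟨c, hc, hmc⟩ := (key m hm).tors (algebraMap A B t * b - algebraMap A B x) (by
        rw [Algebra.smul_def]
        linear_combination -h)
      obtain ⟨a, ha⟩ := (key t t.2).inj (x + c) b (by
        rw [map_add, Algebra.smul_def]; linear_combination -hc)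
      obtain ⟨d, hd, htd⟩ := (key t t.2).tors (b - algebraMap A B a) (by
        have := congrArg (algebraMap A B) ha
        rw [map_add, map_mul] at this
        rw [Algebra.smul_def]; linear_combination hc + this)
      refine ⟨a + d, Prod.ext ?_ ?_⟩
      · simp only [map_add]; linear_combination -hd
      · simp only
        rw [eq_comm, IsLocalization.mk'_eq_iff_eq_mul, ← map_mul,
          IsLocalization.eq_iff_exists (Submonoid.closure S)]
        exact ⟨⟨m, hm⟩, by simp only; linear_combination m * ha - m * htd - hmc⟩
    · rintro ⟨a, h⟩
      rw [← h]
      simp only [halg, sub_self]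
  · intro y
    obtain ⟨b, ⟨t', ht'⟩, rfl⟩ :=
      IsLocalization.exists_mk'_eq (Submonoid.closure (algebraMap A B '' S)) y
    have ht2 := ht'
    rw [himg] at ht2
    obtain ⟨t, ht, rfl⟩ := ht2
    obtain ⟨a, b', rfl⟩ := (key t ht).surj b
    refine ⟨(b', - IsLocalization.mk' _ a ⟨t, ht⟩), ?_⟩
    simp only [map_neg, hmk]
    rw [eq_comm, IsLocalization.mk'_eq_iff_eq_mul, sub_neg_eq_add, add_mul]
    have := IsLocalization.mk'_spec (Localization (Submonoid.closure (algebraMap A B '' S)))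
      (algebraMap A B a) ⟨algebraMap A B t, hmem t ht⟩
    rw [Algebra.smul_def, map_add, map_mul]
    linear_combination -this
end

section
/- Let f : A ⟶ B be a flat homomorphism of commutative rings and let S ⊆ A be a set of elements such that for every s ∈ S the induced map A/sA ⟶ B/f(s)B is an isomorphism. Then for every A-module M, the A-linear map M ⟶ (B ⊗_A M) ⊕ M[S⁻¹] given by m ↦ (1 ⊗ m, m/1) is injective, where M[S⁻¹] denotes the localization of M at the multiplicative submonoid of A generated by S. -/
open scoped TensorProduct

theorem aux_single {A B : Type*} [CommRing A] [CommRing B] [Algebra A B] [Module.Flat A B]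
    (s : A) (hsurj : ∀ y : B, ∃ a : A, ∃ b : B, y = algebraMap A B a + algebraMap A B s * b)
    (hinj : ∀ (a : A) (b : B), algebraMap A B a = algebraMap A B s * b → ∃ c, a = s * c)
    {M : Type*} [AddCommGroup M] [Module A M] (m : M) (hm : s • m = 0)
    (h1 : (1 : B) ⊗ₜ[A] m = 0) : m = 0 := by
  have h2 : ∑ i : Unit, (fun _ : Unit => m) i ⊗ₜ[A] (fun _ : Unit => (1 : B)) i = 0 := by
    have := congrArg (TensorProduct.comm A B M) h1
    simpa using this
  obtain ⟨k, a, y, hy, ha⟩ :=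
    TensorProduct.vanishesTrivially_of_sum_tmul_eq_zero_of_rTensor_injective A
      (Module.Flat.rTensor_preserves_injective_linearMap _ (Submodule.injective_subtype _)) h2
  have hy : (1 : B) = ∑ j, a () j • y j := hy ()
  have ha : ∀ j, a () j • m = 0 := by simpa using ha
  choose c b hcb using fun j => hsurj (y j)
  obtain ⟨d, hd⟩ := hinj (1 - ∑ j, a () j * c j) (∑ j, algebraMap A B (a () j) * b j) (by
    simp only [map_sub, map_one, map_sum, map_mul, Finset.mul_sum]
    rw [sub_eq_iff_eq_add, ← Finset.sum_add_distrib]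
    refine hy.trans ?_
    refine Finset.sum_congr rfl fun j _ => ?_
    rw [Algebra.smul_def, hcb j]
    ring)
  have h3 : (1 - ∑ j, a () j * c j) • m = m := by
    rw [sub_smul, one_smul, Finset.sum_smul]
    simp [mul_comm (a () _), mul_smul, ha]
  rw [← h3, hd, mul_comm, mul_smul, hm, smul_zero]

/-- Let `f : A ⟶ B` be a flat homomorphism of commutative rings (here encoded
by an algebra structure, `f = algebraMap A B`) and `S ⊆ A` a set of elements such that for
every `s ∈ S` the induced map `A/sA ⟶ B/f(s)B` is an isomorphism.  Then for every `A`-module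
`M`, the map `M ⟶ (B ⊗_A M) ⊕ M[S⁻¹]`, `m ↦ (1 ⊗ m, m/1)`, is injective. -/
theorem injective_tensor_prod_localization_of_flat_quotient_iso
    {A B : Type*} [CommRing A] [CommRing B] [Algebra A B] [Module.Flat A B]
    (S : Set A)
    (hiso : ∀ s ∈ S, Function.Bijective
      (Ideal.quotientMap (Ideal.span {algebraMap A B s}) (algebraMap A B)
        (by rw [Ideal.span_le, Set.singleton_subset_iff]
            exact Ideal.mem_comap.mpr (Ideal.subset_span (Set.mem_singleton _)))))
    (M : Type*) [AddCommGroup M] [Module A M] :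
    Function.Injective (fun m : M =>
      ((((1 : B) ⊗ₜ[A] m : B ⊗[A] M),
          LocalizedModule.mkLinearMap (Submonoid.closure S) M m) :
        (B ⊗[A] M) × LocalizedModule (Submonoid.closure S) M)) := by
  have key : ∀ t ∈ Submonoid.closure S, ∀ m : M, t • m = 0 → (1 : B) ⊗ₜ[A] m = 0 → m = 0 := by
    intro t ht
    induction ht using Submonoid.closure_induction with
    | mem s hs =>
      intro m hm h1
      obtain ⟨hi, hsu⟩ := hiso s hs
      refine aux_single s ?_ ?_ m hm h1
      · intro y
        obtain ⟨x, hx⟩ := hsu (Ideal.Quotient.mk _ y)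
        obtain ⟨a, rfl⟩ := Ideal.Quotient.mk_surjective x
        rw [Ideal.quotientMap_mk, eq_comm, Ideal.Quotient.eq, Ideal.mem_span_singleton] at hx
        obtain ⟨b, hb⟩ := hx
        exact ⟨a, b, by rw [← hb]; ring⟩
      · intro a b hab
        have : Ideal.Quotient.mk (Ideal.span {s}) a = 0 := by
          apply hi
          rw [Ideal.quotientMap_mk, map_zero, Ideal.Quotient.eq_zero_iff_mem,
            Ideal.mem_span_singleton]
          exact ⟨b, hab⟩
        rwa [Ideal.Quotient.eq_zero_iff_mem, Ideal.mem_span_singleton] at this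
    | one => intro m hm _; simpa using hm
    | mul x y _ _ hx hy =>
      intro m hm h1
      refine hy m (hx (y • m) (by rw [← mul_smul, hm]) ?_) h1
      rw [TensorProduct.tmul_smul, h1, smul_zero]
  intro m n hmn
  obtain ⟨h1, h2⟩ := Prod.mk.inj hmn
  obtain ⟨c, hc⟩ := (IsLocalizedModule.eq_iff_exists (Submonoid.closure S)
    (LocalizedModule.mkLinearMap (Submonoid.closure S) M)).mp h2
  refine sub_eq_zero.mp (key c c.2 (m - n) ?_ ?_)
  · rw [smul_sub, sub_eq_zero]
    exact hc
  · rw [TensorProduct.tmul_sub, sub_eq_zero]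
    exact h1
end

section
/- Let R be a commutative ring and let M be an invertible R-module, i.e. there exist an R-module N and an R-linear isomorphism M ⊗_R N ≅ R. Then the canonical swap action on M ⊗_R M is trivial: for all x, y ∈ M one has x ⊗ y = y ⊗ x in M ⊗_R M; equivalently, the braiding isomorphism M ⊗_R M ≅ M ⊗_R M exchanging the two tensor factors is equal to the identity. -/
open scoped TensorProduct

/-- Let `R` be a commutative ring and `M` an invertible `R`-module, i.e. there
exist an `R`-module `N` and an `R`-linear isomorphism `M ⊗_R N ≅ R`.  Then the canonical swap
action on `M ⊗_R M` is trivial: `x ⊗ y = y ⊗ x` for all `x, y ∈ M`; equivalently, the braiding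
isomorphism of `M ⊗_R M` exchanging the two tensor factors is the identity. -/
theorem tmul_comm_of_invertible_module
    {R : Type*} [CommRing R] {M : Type*} [AddCommGroup M] [Module R M]
    {N : Type*} [AddCommGroup N] [Module R N]
    (e : (M ⊗[R] N) ≃ₗ[R] R) :
    (∀ x y : M, x ⊗ₜ[R] y = y ⊗ₜ[R] x) ∧
      TensorProduct.comm R M M = LinearEquiv.refl R (M ⊗[R] M) := by
  have : Module.Invertible R M := Module.Invertible.left e
  have h : TensorProduct.comm R M M = LinearEquiv.refl R (M ⊗[R] M) :=
    Module.Invertible.tensorProductComm_eq_refl R M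
  exact ⟨fun x y => (congrArg (fun f => f (y ⊗ₜ[R] x)) h), h⟩
end

section
/- Let C be a category with pullbacks, A a category with small limits, and F : Cᵒᵖ ⥤ A a presheaf. Let p′ : x ⟶ y, q′ : x ⟶ z, p : z ⟶ w, q : y ⟶ w be morphisms with q ∘ p′ = p ∘ q′. For n ≥ 0, let Uₙ(p′) ⟶ Uₙ(p) denote the morphism x ×_y ⋯ ×_y x ⟶ z ×_w ⋯ ×_w z between the (n+1)-fold fibre products induced by the square (by q′ on factors and q on the bases), and similarly let Uₘ(q′) ⟶ Uₘ(q) denote the induced morphism x ×_z ⋯ ×_z x ⟶ y ×_w ⋯ ×_w y. Assume that F satisfies Čech descent for the morphism Uₙ(p′) ⟶ Uₙ(p) for every n ≥ 0 and for the morphism Uₘ(q′) ⟶ Uₘ(q) for every m ≥ 0. Then F satisfies Čech descent for p if and only if F satisfies Čech descent for q. -/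
open CategoryTheory CategoryTheory.Limits Opposite

universe v u v' u'

variable {C : Type u} [Category.{v} C] [HasFiniteWidePullbacks C]
variable {A : Type u'} [Category.{v'} A]

/-- The canonical cone, with apex `F(w)`, on the cosimplicial object `[n] ↦ F(Uₙ(f))` in `A`
obtained by applying `F : Cᵒᵖ ⥤ A` to the Čech nerve of `f : y ⟶ w`, whose legs are induced by
the augmentation of the Čech nerve. -/
noncomputable def cechDescentCone (F : Cᵒᵖ ⥤ A) {y w : C} (f : y ⟶ w) :
    Cone ((Arrow.mk f).cechNerve.rightOp ⋙ F) where
  pt := F.obj (op w)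
  π :=
    { app := fun m =>
        F.map (WidePullback.base fun _ : Fin (m.len + 1) => (Arrow.mk f).hom).op
      naturality := fun m n g => by
        dsimp
        rw [Category.id_comp, ← F.map_comp, ← op_comp]
        congr 1
        rw [WidePullback.lift_base] }

/-- `F` satisfies **Čech descent** for `f : y ⟶ w` if the canonical cone with apex `F(w)`
exhibits `F(w)` as the limit over the simplex category of the cosimplicial object
`[n] ↦ F(Uₙ(f))`. -/
def CechDescent (F : Cᵒᵖ ⥤ A) {y w : C} (f : y ⟶ w) : Prop :=
  Nonempty (IsLimit (cechDescentCone F f))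

/-- Given a commutative square `q ∘ p′ = p ∘ q′` (i.e. `p′ ≫ q = q′ ≫ p`), this is the induced
morphism `Uₙ(p′) ⟶ Uₙ(p)` between the `(n+1)`-fold fibre products
`x ×_y ⋯ ×_y x ⟶ z ×_w ⋯ ×_w z`, given by `q′` on the factors and by `q` on the bases. -/
noncomputable def inducedCechLevelMap {x y z w : C} (p' : x ⟶ y) (p : z ⟶ w)
    (q' : x ⟶ z) (q : y ⟶ w) (comm : p' ≫ q = q' ≫ p) (n : ℕ) :
    widePullback y (fun _ : Fin (n + 1) => x) (fun _ => p') ⟶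
      widePullback w (fun _ : Fin (n + 1) => z) (fun _ => p) :=
  WidePullback.lift (WidePullback.base _ ≫ q) (fun i => WidePullback.π _ i ≫ q')
    (fun i => by rw [Category.assoc, ← comm, ← Category.assoc, WidePullback.π_arrow])

/-- The `(n+1)`-fold fibre product of `f`. -/
noncomputable abbrev cechU {y w : C} (f : y ⟶ w) (n : ℕ) : C :=
  widePullback w (fun _ : Fin (n + 1) => y) (fun _ => f)

noncomputable abbrev cechB {y w : C} (f : y ⟶ w) (n : ℕ) : cechU f n ⟶ w :=
  WidePullback.base (fun _ : Fin (n + 1) => f)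

noncomputable abbrev cechP {y w : C} (f : y ⟶ w) (n : ℕ) (i : Fin (n + 1)) : cechU f n ⟶ y :=
  WidePullback.π (fun _ : Fin (n + 1) => f) i

lemma cechP_comp {y w : C} (f : y ⟶ w) (n : ℕ) (i : Fin (n + 1)) :
    cechP f n i ≫ f = cechB f n := WidePullback.π_arrow _ _

noncomputable def cechL {t y w : C} (f : y ⟶ w) (n : ℕ) (b : t ⟶ w) (l : Fin (n + 1) → (t ⟶ y))
    (h : ∀ i, l i ≫ f = b) : t ⟶ cechU f n :=
  WidePullback.lift b l h

lemma cechL_B {t y w : C} (f : y ⟶ w) (n : ℕ) (b : t ⟶ w) (l : Fin (n + 1) → (t ⟶ y))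
    (h : ∀ i, l i ≫ f = b) : cechL f n b l h ≫ cechB f n = b :=
  WidePullback.lift_base _ _ _ _

lemma cechL_P {t y w : C} (f : y ⟶ w) (n : ℕ) (b : t ⟶ w) (l : Fin (n + 1) → (t ⟶ y))
    (h : ∀ i, l i ≫ f = b) (i : Fin (n + 1)) : cechL f n b l h ≫ cechP f n i = l i :=
  WidePullback.lift_π _ _ _ _ _

lemma cech_ext {t y w : C} {f : y ⟶ w} {n : ℕ} {a b : t ⟶ cechU f n}
    (hP : ∀ i, a ≫ cechP f n i = b ≫ cechP f n i) (hB : a ≫ cechB f n = b ≫ cechB f n) :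
    a = b := WidePullback.hom_ext _ _ _ hP hB

/-- functoriality in the simplex category -/
noncomputable def cechM {y w : C} (f : y ⟶ w) {m n : ℕ} (α : Fin (m + 1) → Fin (n + 1)) :
    cechU f n ⟶ cechU f m :=
  cechL f m (cechB f n) (fun i => cechP f n (α i)) (fun _ => cechP_comp _ _ _)

lemma cechM_P {y w : C} (f : y ⟶ w) {m n : ℕ} (α : Fin (m + 1) → Fin (n + 1)) (i) :
    cechM f α ≫ cechP f m i = cechP f n (α i) := cechL_P _ _ _ _ _ _

lemma cechM_B {y w : C} (f : y ⟶ w) {m n : ℕ} (α : Fin (m + 1) → Fin (n + 1)) :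
    cechM f α ≫ cechB f m = cechB f n := cechL_B _ _ _ _ _

lemma CechDescent.ext {F : Cᵒᵖ ⥤ A} {y w : C} {f : y ⟶ w} (h : CechDescent F f) {T : A}
    {a b : T ⟶ F.obj (op w)}
    (hab : ∀ n, a ≫ F.map (cechB f n).op = b ≫ F.map (cechB f n).op) : a = b := by
  obtain ⟨h⟩ := h
  exact h.hom_ext (fun j => hab j.len)

lemma CechDescent.exists_lift {F : Cᵒᵖ ⥤ A} {y w : C} {f : y ⟶ w} (h : CechDescent F f) {T : A}
    (s : ∀ n, T ⟶ F.obj (op (cechU f n)))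
    (hs : ∀ (m n : ℕ) (α : Fin (m + 1) →o Fin (n + 1)),
      s m ≫ F.map (cechM f α).op = s n) :
    ∃ a : T ⟶ F.obj (op w), ∀ n, a ≫ F.map (cechB f n).op = s n := by
  obtain ⟨h⟩ := h
  let c : Cone ((Arrow.mk f).cechNerve.rightOp ⋙ F) :=
    { pt := T
      π := { app := fun m => s m.len
             naturality := fun m n g =>
              (Category.id_comp _).trans (hs m.len n.len g.toOrderHom).symm } }
  exact ⟨h.lift c, fun n => h.fac c (SimplexCategory.mk n)⟩

lemma CechDescent.mk' {F : Cᵒᵖ ⥤ A} {y w : C} {f : y ⟶ w}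
    (h1 : ∀ (T : A) (a b : T ⟶ F.obj (op w)),
      (∀ n, a ≫ F.map (cechB f n).op = b ≫ F.map (cechB f n).op) → a = b)
    (h2 : ∀ (T : A) (s : ∀ n, T ⟶ F.obj (op (cechU f n))),
      (∀ (m n : ℕ) (α : Fin (m + 1) →o Fin (n + 1)), s m ≫ F.map (cechM f α).op = s n) →
      ∃ a : T ⟶ F.obj (op w), ∀ n, a ≫ F.map (cechB f n).op = s n) :
    CechDescent F f := by
  have key (c : Cone ((Arrow.mk f).cechNerve.rightOp ⋙ F)) :=
    h2 c.pt (fun n => c.π.app (SimplexCategory.mk n)) (fun m n α =>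
      ((c.π.naturality (SimplexCategory.Hom.mk (a := .mk m) (b := .mk n) α)).symm.trans
        (Category.id_comp _)))
  choose l hl using key
  exact ⟨{ lift := l
           fac := fun c j => hl c j.len
           uniq := fun c a ha => h1 _ _ _ (fun n => (ha (.mk n)).trans (hl c n).symm) }⟩

section square
variable {x y z w : C} (p' : x ⟶ y) (p : z ⟶ w) (q' : x ⟶ z) (q : y ⟶ w)
  (comm : p' ≫ q = q' ≫ p)

lemma inducedB (n : ℕ) : inducedCechLevelMap p' p q' q comm n ≫ cechB p n = cechB p' n ≫ q :=
  WidePullback.lift_base _ _ _ _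

lemma inducedP (n : ℕ) (i : Fin (n + 1)) :
    inducedCechLevelMap p' p q' q comm n ≫ cechP p n i = cechP p' n i ≫ q' :=
  WidePullback.lift_π _ _ _ _ _

/-- The comparison map from the bisimplicial level to the fibre product of the first map. -/
noncomputable def cechG (n m : ℕ) :
    cechU (inducedCechLevelMap q' q p' p comm.symm m) n ⟶ cechU p n :=
  cechL p n (cechB _ n ≫ cechB q m) (fun j => cechP _ n j ≫ cechB q' m) (fun j => by
    rw [Category.assoc, ← inducedB q' q p' p comm.symm, ← Category.assoc, cechP_comp])

lemma cechG_B (n m : ℕ) :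
    cechG p' p q' q comm n m ≫ cechB p n = cechB _ n ≫ cechB q m := cechL_B _ _ _ _ _

lemma cechG_P (n m : ℕ) (j) :
    cechG p' p q' q comm n m ≫ cechP p n j = cechP _ n j ≫ cechB q' m := cechL_P _ _ _ _ _ _

lemma cechG_nat_left {n n' : ℕ} (m : ℕ) (α : Fin (n + 1) → Fin (n' + 1)) :
    cechM _ α ≫ cechG p' p q' q comm n m = cechG p' p q' q comm n' m ≫ cechM p α := by
  apply cech_ext
  · intro i
    rw [Category.assoc, Category.assoc, cechG_P, cechM_P, cechG_P, ← Category.assoc, cechM_P]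
  · rw [Category.assoc, Category.assoc, cechG_B, cechM_B, cechG_B, ← Category.assoc, cechM_B]

/-- functoriality of `Y n m` in `m`. -/
noncomputable def cechY (n : ℕ) {m m' : ℕ} (α : Fin (m + 1) → Fin (m' + 1)) :
    cechU (inducedCechLevelMap q' q p' p comm.symm m') n ⟶
      cechU (inducedCechLevelMap q' q p' p comm.symm m) n :=
  cechL _ n (cechB _ n ≫ cechM q α) (fun j => cechP _ n j ≫ cechM q' α) (fun j => by
    rw [← cechP_comp _ n j, Category.assoc, Category.assoc]
    congr 1
    apply cech_ext
    · intro i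
      rw [Category.assoc, Category.assoc, inducedP, cechM_P, inducedP, ← Category.assoc, cechM_P]
    · rw [Category.assoc, Category.assoc, inducedB, cechM_B, inducedB, ← Category.assoc, cechM_B])

lemma cechY_B (n : ℕ) {m m' : ℕ} (α : Fin (m + 1) → Fin (m' + 1)) :
    cechY p' p q' q comm n α ≫ cechB _ n = cechB _ n ≫ cechM q α := cechL_B _ _ _ _ _

lemma cechY_G (n : ℕ) {m m' : ℕ} (α : Fin (m + 1) → Fin (m' + 1)) :
    cechY p' p q' q comm n α ≫ cechG p' p q' q comm n m = cechG p' p q' q comm n m' := by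
  apply cech_ext
  · intro i
    rw [Category.assoc, cechG_P, cechG_P, ← Category.assoc, cechY, cechL_P, Category.assoc,
      cechM_B]
  · rw [Category.assoc, cechG_B, cechG_B, ← Category.assoc, cechY_B, Category.assoc, cechM_B]

/-- The exchange map between the two bisimplicial levels. -/
noncomputable def cechT (n m : ℕ) :
    cechU (inducedCechLevelMap p' p q' q comm n) m ⟶
      cechU (inducedCechLevelMap q' q p' p comm.symm m) n :=
  cechL _ n (cechG q' q p' p comm.symm m n)
    (fun j => cechL q' m (cechB _ m ≫ cechP p n j) (fun i => cechP _ m i ≫ cechP p' n j)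
      (fun i => by
        rw [Category.assoc, ← inducedP p' p q' q comm, ← Category.assoc, cechP_comp]))
    (fun j => by
      apply cech_ext
      · intro i
        rw [Category.assoc, inducedP q' q p' p comm.symm m i, ← Category.assoc, cechL_P, cechG_P, Category.assoc,
          cechP_comp]
      · rw [Category.assoc, inducedB, ← Category.assoc, cechL_B, cechG_B, Category.assoc,
          cechP_comp])

lemma cechT_B (n m : ℕ) :
    cechT p' p q' q comm n m ≫ cechB _ n = cechG q' q p' p comm.symm m n := cechL_B _ _ _ _ _

lemma cechT_G (n m : ℕ) :
    cechT p' p q' q comm n m ≫ cechG p' p q' q comm n m = cechB _ m := by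
  apply cech_ext
  · intro i
    rw [Category.assoc, cechG_P, ← Category.assoc, cechT, cechL_P, cechL_B]
  · rw [Category.assoc, cechG_B, ← Category.assoc, cechT_B, cechG_B]

lemma cechDescent_of_square (F : Cᵒᵖ ⥤ A)
    (hp : ∀ n : ℕ, CechDescent F (inducedCechLevelMap p' p q' q comm n))
    (hq : ∀ m : ℕ, CechDescent F (inducedCechLevelMap q' q p' p comm.symm m))
    (h : CechDescent F q) : CechDescent F p := by
  apply CechDescent.mk'
  · intro T a b hab
    apply h.ext
    intro m
    apply (hq m).ext
    intro n
    rw [Category.assoc, Category.assoc, ← F.map_comp, ← op_comp,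
      ← cechG_B p' p q' q comm n m, op_comp, F.map_comp, ← Category.assoc, hab, Category.assoc]
  · intro T s hs
    have h1 : ∀ m, ∃ r : T ⟶ F.obj (op (cechU q m)),
        ∀ n, r ≫ F.map (cechB (inducedCechLevelMap q' q p' p comm.symm m) n).op =
          s n ≫ F.map (cechG p' p q' q comm n m).op := by
      intro m
      refine (hq m).exists_lift (fun n => s n ≫ F.map (cechG p' p q' q comm n m).op) ?_
      intro n n' α
      rw [Category.assoc, ← F.map_comp, ← op_comp, cechG_nat_left, op_comp, F.map_comp,
        ← Category.assoc, hs]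
    choose r hr using h1
    obtain ⟨a, ha⟩ := h.exists_lift r (by
      intro m m' α
      apply (hq m').ext
      intro n
      rw [hr, Category.assoc, ← F.map_comp, ← op_comp, ← cechY_B p' p q' q comm, op_comp,
        F.map_comp, ← Category.assoc, hr, Category.assoc, ← F.map_comp, ← op_comp, cechY_G])
    refine ⟨a, fun n => ?_⟩
    apply (hp n).ext
    intro m
    rw [← cechT_G p' p q' q comm n m, op_comp, F.map_comp, ← Category.assoc (s n), ← hr, ← ha]
    simp only [Category.assoc, ← F.map_comp, ← op_comp]
    rw [cechG_B]

end square

/-- Given a commutative square `q ∘ p′ = p ∘ q′` in a category with pullbacks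
and a presheaf `F` valued in a category with small limits, if `F` satisfies Čech descent for
all the induced morphisms `Uₙ(p′) ⟶ Uₙ(p)` and `Uₘ(q′) ⟶ Uₘ(q)` between iterated fibre
products, then `F` satisfies Čech descent for `p` if and only if it does for `q`. -/
theorem cechDescent_iff_of_square [HasLimits A] (F : Cᵒᵖ ⥤ A)
    {x y z w : C} (p' : x ⟶ y) (q' : x ⟶ z) (p : z ⟶ w) (q : y ⟶ w)
    (comm : p' ≫ q = q' ≫ p)
    (hp : ∀ n : ℕ, CechDescent F (inducedCechLevelMap p' p q' q comm n))
    (hq : ∀ m : ℕ, CechDescent F (inducedCechLevelMap q' q p' p comm.symm m)) :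
    CechDescent F p ↔ CechDescent F q := by
  exact ⟨cechDescent_of_square q' q p' p comm.symm F hq hp, cechDescent_of_square p' p q' q comm F hp hq⟩
end

section
/- Let C be a category with pullbacks, A a category with small limits, F : Cᵒᵖ ⥤ A a presheaf, and let g : z ⟶ y and f : y ⟶ w be composable morphisms in C. Assume that for every morphism h : t ⟶ w, the presheaf F satisfies Čech descent for the base change t ×_w z ⟶ t of f ∘ g along h (in particular, taking h to be the identity of w, for f ∘ g itself). Then F satisfies Čech descent for f. -/
open CategoryTheory CategoryTheory.Limits Opposite

universe v u v' u'

variable {C : Type u} [Category.{v} C] [HasFiniteWidePullbacks C]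
variable {A : Type u'} [Category.{v'} A]

lemma res_comp (F : Cᵒᵖ ⥤ A) {T : A} {p p' q q' : C} (a : T ⟶ F.obj (op p))
    (b : T ⟶ F.obj (op p')) (i : q ⟶ p) (j : q ⟶ p') (hab : a ≫ F.map i.op = b ≫ F.map j.op)
    (l : q' ⟶ q) (i' : q' ⟶ p) (j' : q' ⟶ p') (hi : l ≫ i = i') (hj : l ≫ j = j') :
    a ≫ F.map i'.op = b ≫ F.map j'.op := by
  subst hi hj
  simp only [op_comp, F.map_comp, reassoc_of% hab]

/-- Concrete (equalizer) form of descent for `k`: separatedness and gluing. -/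
structure ConcreteDescent (F : Cᵒᵖ ⥤ A) {p t : C} (k : p ⟶ t) : Prop where
  sep : ∀ {T : A} (a b : T ⟶ F.obj (op t)), a ≫ F.map k.op = b ≫ F.map k.op → a = b
  glue : ∀ {T : A} (b : T ⟶ F.obj (op p)),
    (∀ {q : C} (u v : q ⟶ p), u ≫ k = v ≫ k → b ≫ F.map u.op = b ≫ F.map v.op) →
    ∃ a : T ⟶ F.obj (op t), a ≫ F.map k.op = b

lemma CechDescent.concrete {F : Cᵒᵖ ⥤ A} {p t : C} {k : p ⟶ t} (h : CechDescent F k) :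
    ConcreteDescent F k := by
  obtain ⟨hl⟩ := h
  refine ⟨fun {T} a b hab => ?_, fun {T} b hb => ?_⟩
  · refine hl.hom_ext fun m => ?_
    change a ≫ F.map (WidePullback.base fun _ : Fin (m.len + 1) => k).op =
      b ≫ F.map (WidePullback.base fun _ : Fin (m.len + 1) => k).op
    rw [← WidePullback.π_arrow (fun _ : Fin (m.len + 1) => k) 0, op_comp, F.map_comp,
      reassoc_of% hab]
  · let s : Cone ((Arrow.mk k).cechNerve.rightOp ⋙ F) :=
      { pt := T
        π :=
          { app := fun m => b ≫ F.map (WidePullback.π (fun _ : Fin (m.len + 1) => k) 0).op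
            naturality := fun m n g => by
              change 𝟙 T ≫ b ≫ F.map (WidePullback.π (fun _ : Fin (n.len + 1) => k) 0).op =
                (b ≫ F.map (WidePullback.π (fun _ : Fin (m.len + 1) => k) 0).op) ≫
                  F.map ((Arrow.mk k).cechNerve.map g.op).op
              rw [Category.id_comp, Category.assoc, ← F.map_comp, ← op_comp]
              apply hb
              have e : (Arrow.mk k).cechNerve.map g.op ≫
                  WidePullback.π (fun _ : Fin (m.len + 1) => k) 0 =
                  WidePullback.π (fun _ : Fin (n.len + 1) => k) (g.toOrderHom 0) :=
                WidePullback.lift_π _ _ _ _ _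
              rw [e, WidePullback.π_arrow, WidePullback.π_arrow] } }
    refine ⟨hl.lift s, ?_⟩
    have e : hl.lift s ≫ F.map (WidePullback.base fun _ : Fin (0 + 1) => k).op =
        b ≫ F.map (WidePullback.π (fun _ : Fin (0 + 1) => k) 0).op :=
      hl.fac s (SimplexCategory.mk 0)
    have e' := res_comp F (hl.lift s) b _ _ e (WidePullback.lift k
      (fun _ => 𝟙 p) (by simp)) k (𝟙 p) (WidePullback.lift_base _ _ _ _)
      (WidePullback.lift_π _ _ _ _ _)
    rw [op_id, F.map_id, Category.comp_id] at e'
    exact e'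

lemma ConcreteDescent.cech {F : Cᵒᵖ ⥤ A} {p t : C} {k : p ⟶ t} (h : ConcreteDescent F k) :
    CechDescent F k := by
  let σ : p ⟶ widePullback t (fun _ : Fin (0 + 1) => p) (fun _ => k) :=
    WidePullback.lift k (fun _ => 𝟙 p) (by simp)
  let β (s : Cone ((Arrow.mk k).cechNerve.rightOp ⋙ F)) : s.pt ⟶ F.obj (op p) :=
    s.π.app (SimplexCategory.mk 0) ≫ F.map σ.op
  have key (s : Cone ((Arrow.mk k).cechNerve.rightOp ⋙ F)) (n : SimplexCategory)
      (i : Fin (n.len + 1)) :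
      β s ≫ F.map (WidePullback.π (fun _ : Fin (n.len + 1) => k) i).op = s.π.app n := by
    rw [← s.w (SimplexCategory.const (SimplexCategory.mk 0) n i)]
    dsimp only [β]
    rw [Category.assoc, ← F.map_comp, ← op_comp]
    change _ = _ ≫ F.map ((Arrow.mk k).cechNerve.map
      (SimplexCategory.const (SimplexCategory.mk 0) n i).op).op
    congr 3
    refine WidePullback.hom_ext (fun _ : Fin (0 + 1) => k) _ _ (fun j => ?_) ?_
    · refine Eq.trans ?_ (WidePullback.lift_π (fun _ : Fin (0 + 1) => k) _ _ _ j).symm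
      rw [Category.assoc]
      dsimp only [σ]
      rw [WidePullback.lift_π, Category.comp_id]
      rfl
    · refine Eq.trans ?_ (WidePullback.lift_base _ _ _ _).symm
      rw [Category.assoc]
      dsimp only [σ]
      rw [WidePullback.lift_base, WidePullback.π_arrow]
      rfl
  have compat (s : Cone ((Arrow.mk k).cechNerve.rightOp ⋙ F)) {q : C} (u v : q ⟶ p)
      (huv : u ≫ k = v ≫ k) : β s ≫ F.map u.op = β s ≫ F.map v.op := by
    let l : q ⟶ widePullback t (fun _ : Fin (1 + 1) => p) (fun _ => k) :=
      WidePullback.lift (u ≫ k) ![u, v] (by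
        intro j
        fin_cases j
        · rfl
        · exact huv.symm)
    have h0 : l ≫ WidePullback.π (fun _ : Fin (1 + 1) => k) 0 = u := WidePullback.lift_π _ _ _ _ _
    have h1 : l ≫ WidePullback.π (fun _ : Fin (1 + 1) => k) 1 = v := WidePullback.lift_π _ _ _ _ _
    have e := (key s (SimplexCategory.mk 1) 0).trans (key s (SimplexCategory.mk 1) 1).symm
    exact res_comp F _ _ _ _ e l u v h0 h1
  choose L hL using fun s => h.glue (β s) (compat s)
  refine ⟨⟨L, fun s n => ?_, fun s m hm => ?_⟩⟩
  · change L s ≫ F.map (WidePullback.base fun _ : Fin (n.len + 1) => k).op = _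
    rw [← WidePullback.π_arrow (fun _ : Fin (n.len + 1) => k) 0, op_comp, F.map_comp,
      ← Category.assoc, hL, key]
  · change s.pt ⟶ F.obj (op t) at m
    apply h.sep
    rw [hL]
    have e : m ≫ F.map (WidePullback.base fun _ : Fin (0 + 1) => k).op = _ :=
      hm (SimplexCategory.mk 0)
    dsimp only [β]
    rw [← e, Category.assoc, ← F.map_comp, ← op_comp]
    dsimp only [σ]
    rw [WidePullback.lift_base]

/-- Let `g : z ⟶ y` and `f : y ⟶ w` be composable morphisms in a category
with pullbacks, and `F` a presheaf valued in a category with small limits.  If `F` satisfies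
Čech descent for the base change `t ×_w z ⟶ t` of `f ∘ g` along every morphism `h : t ⟶ w`
(in particular for `f ∘ g` itself), then `F` satisfies Čech descent for `f`. -/
theorem cechDescent_of_refinement [HasLimits A] (F : Cᵒᵖ ⥤ A)
    {z y w : C} (g : z ⟶ y) (f : y ⟶ w)
    (hdesc : ∀ (t : C) (h : t ⟶ w), CechDescent F (pullback.snd (g ≫ f) h)) :
    CechDescent F f := by
  apply ConcreteDescent.cech
  have H := fun t h => (hdesc t h).concrete
  have hk : pullback.snd (g ≫ f) (𝟙 w) = pullback.fst (g ≫ f) (𝟙 w) ≫ g ≫ f := by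
    simpa using (pullback.condition (f := g ≫ f) (g := 𝟙 w)).symm
  refine ⟨fun {T} a b hab => ?_, fun {T} b hb => ?_⟩
  · apply (H w (𝟙 w)).sep
    exact res_comp F a b f f hab (pullback.fst (g ≫ f) (𝟙 w) ≫ g) _ _ (by simp [hk]) (by simp [hk])
  · obtain ⟨a, ha⟩ := (H w (𝟙 w)).glue (b ≫ F.map (pullback.fst (g ≫ f) (𝟙 w) ≫ g).op) (by
      intro q u v huv
      rw [Category.assoc, Category.assoc, ← F.map_comp, ← F.map_comp, ← op_comp, ← op_comp]
      apply hb
      rw [hk] at huv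
      simpa using huv)
    have ha' : a ≫ F.map (g ≫ f).op = b ≫ F.map g.op := by
      exact res_comp F a b _ _ ha (pullback.lift (𝟙 z) (g ≫ f) (by simp)) _ _
        (pullback.lift_snd _ _ _) (by rw [pullback.lift_fst_assoc, Category.id_comp])
    refine ⟨a, (H y f).sep _ _ ?_⟩
    rw [Category.assoc, ← F.map_comp, ← op_comp, ← pullback.condition, op_comp, F.map_comp,
      reassoc_of% ha', ← F.map_comp, ← op_comp]
    apply hb
    rw [Category.assoc, pullback.condition]
end
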